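/- Let p > 2. Then for all real numbers x ≥ 0 and y ≥ 0 one has (y − (p−1)x)·(x+y)^{p−1} + (p−1)^{p−1}·x^p ≥ 0; moreover, for fixed x the left-hand side, viewed as a function of y on [0,∞), attains its minimum value 0 at y = (p−2)x. -/

import Mathlib

/-!
With `s = x + y` the inequality reads `p x s^(p-1) ≤ s^p + (p-1)^(p-1) x^p`. This is Young's
inequality with conjugate exponents `p` and `p / (p - 1)`, applied to `(p - 1) x` and `s^(p-1)`
and multiplied by `p / (p - 1)`. Its equality case `s = (p - 1) x` is `y = (p - 2) x`.
-/

open Real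

/-- Splitting off one factor; valid at `a = 0` as well, because `q ≠ 0`. -/
lemma rpow_eq_rpow_sub_one_mul {a q : ℝ} (ha : 0 ≤ a) (hq : q ≠ 0) :
    a ^ q = a ^ (q - 1) * a := by
  rw [← rpow_add_one' ha (by simpa using hq), sub_add_cancel]

/-- For `p > 2` and `x, y ≥ 0`, `(y − (p−1)x)(x+y)^{p−1} + (p−1)^{p−1} x^p ≥ 0`, and
for fixed `x` the left-hand side, as a function of `y ∈ [0,∞)`, attains its minimum
value `0` at `y = (p−2)x`. -/
theorem stmt_17 (p : ℝ) (hp : 2 < p) (x : ℝ) (hx : 0 ≤ x) :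
    (∀ y : ℝ, 0 ≤ y →
        0 ≤ (y - (p - 1) * x) * (x + y) ^ (p - 1) + (p - 1) ^ (p - 1) * x ^ p) ∧
    ((p - 2) * x - (p - 1) * x) * (x + (p - 2) * x) ^ (p - 1) +
        (p - 1) ^ (p - 1) * x ^ p = 0 := by
  have hp0 : 0 < p := by linarith
  have hp1 : 0 < p - 1 := by linarith
  constructor
  · intro y hy
    have hs : 0 ≤ x + y := by positivity
    have young := Real.young_inequality_of_nonneg (mul_nonneg hp1.le hx)
      (rpow_nonneg hs (p - 1)) (Real.HolderConjugate.conjExponent (show 1 < p by linarith))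
    have hexp : (p - 1) * Real.conjExponent p = p := by
      rw [Real.conjExponent]; field_simp
    rw [← rpow_mul hs, hexp, mul_rpow hp1.le hx, rpow_eq_rpow_sub_one_mul hp1.le hp0.ne',
      rpow_eq_rpow_sub_one_mul hs hp0.ne', Real.conjExponent] at young
    have key : (p - 1) * ((y - (p - 1) * x) * (x + y) ^ (p - 1) + (p - 1) ^ (p - 1) * x ^ p)
        = p * ((p - 1) ^ (p - 1) * (p - 1) * x ^ p / p
          + (x + y) ^ (p - 1) * (x + y) / (p / (p - 1)) - (p - 1) * x * (x + y) ^ (p - 1)) := by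
      field_simp
      ring
    refine nonneg_of_mul_nonneg_right ?_ hp1
    rw [key]
    exact mul_nonneg hp0.le (sub_nonneg.2 young)
  · rw [show x + (p - 2) * x = (p - 1) * x by ring, mul_rpow hp1.le hx,
      rpow_eq_rpow_sub_one_mul hx hp0.ne']
    ring
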